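/- Let F be a Kripke frame with a finite set of worlds W (with arbitrary accessibility relation) and possibly infinite domains. If satisfiability of monadic first-order modal formulas with equality over F is reducible to a decidable fragment by the bounded-world structure, then the monadic fragment with equality of the modal logic of F is algorithmically decidable. In particular: the set of monadic modal formulas with equality valid in every model based on a fixed finite-world Kripke frame F is decidable. -/

import Mathlib

/-- Monadic modal formulas with equality: unary predicate letters, propositional
letters, and equality. -/
inductive MMF : Type
  | pred : ℕ → ℕ → MMF          -- unary predicate letter applied to a variable
  | prop : ℕ → MMF              -- propositional letter
  | eq : ℕ → ℕ → MMF            -- equality of variables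
  | fls : MMF
  | imp : MMF → MMF → MMF
  | and : MMF → MMF → MMF
  | or : MMF → MMF → MMF
  | box : MMF → MMF
  | all : ℕ → MMF → MMF
  | ex : ℕ → MMF → MMF

/-- Satisfaction over a Kripke frame `(W, R, (Dom w))` (equality read as identity),
with valuation `Vp` for unary predicate letters and `Vq` for propositional letters. -/
def MMFSat {W D : Type} (R : W → W → Prop) (Dom : W → Set D)
    (Vp : ℕ → W → D → Prop) (Vq : ℕ → W → Prop) : W → (ℕ → D) → MMF → Prop
  | w, σ, .pred p x => Vp p w (σ x)
  | w, _, .prop p => Vq p w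
  | _, σ, .eq x y => σ x = σ y
  | _, _, .fls => False
  | w, σ, .imp φ ψ => MMFSat R Dom Vp Vq w σ φ → MMFSat R Dom Vp Vq w σ ψ
  | w, σ, .and φ ψ => MMFSat R Dom Vp Vq w σ φ ∧ MMFSat R Dom Vp Vq w σ ψ
  | w, σ, .or φ ψ => MMFSat R Dom Vp Vq w σ φ ∨ MMFSat R Dom Vp Vq w σ ψ
  | w, σ, .box φ => ∀ v, R w v → MMFSat R Dom Vp Vq v σ φ
  | w, σ, .all x φ => ∀ d ∈ Dom w, MMFSat R Dom Vp Vq w (Function.update σ x d) φ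
  | w, σ, .ex x φ => ∃ d ∈ Dom w, MMFSat R Dom Vp Vq w (Function.update σ x d) φ

/-- Validity in the frame: truth at every world under every valuation and every
assignment into the world's domain. -/
def MMFValid {W D : Type} (R : W → W → Prop) (Dom : W → Set D) (φ : MMF) : Prop :=
  ∀ (Vp : ℕ → W → D → Prop) (Vq : ℕ → W → Prop) (w : W) (σ : ℕ → D),
    (∀ k, σ k ∈ Dom w) → MMFSat R Dom Vp Vq w σ φ

/-- An injective numerical coding of monadic modal formulas with equality. -/
def encodeMMF : MMF → ℕ
  | .pred p x => Nat.pair 0 (Nat.pair p x)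
  | .prop p => Nat.pair 1 p
  | .eq x y => Nat.pair 2 (Nat.pair x y)
  | .fls => Nat.pair 3 0
  | .imp φ ψ => Nat.pair 4 (Nat.pair (encodeMMF φ) (encodeMMF ψ))
  | .and φ ψ => Nat.pair 5 (Nat.pair (encodeMMF φ) (encodeMMF ψ))
  | .or φ ψ => Nat.pair 6 (Nat.pair (encodeMMF φ) (encodeMMF ψ))
  | .box φ => Nat.pair 7 (encodeMMF φ)
  | .all x φ => Nat.pair 8 (Nat.pair x (encodeMMF φ))
  | .ex x φ => Nat.pair 9 (Nat.pair x (encodeMMF φ))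


open Set in
/-- Two finite-or-infinite sets whose sizes agree up to the threshold `M` carry colourings whose
colour classes agree up to the threshold `N`, provided `M` is at least `N` times the number of
colours. -/
theorem exists_coloring_min_encard_eq {D D' K : Type} [Finite K] [Nonempty K]
    {X : Set D} {X' : Set D'} {N M : ℕ} (hM : N * Nat.card K ≤ M)
    (h : min X.encard M = min X'.encard M) (c : D → K) :
    ∃ c' : D' → K, ∀ k, min (X ∩ c ⁻¹' {k}).encard N = min (X' ∩ c' ⁻¹' {k}).encard N := by
  classical
  have := Fintype.ofFinite K
  by_cases hX : X.encard < M
  · have hX' : X'.encard = X.encard := by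
      rw [min_eq_left hX.le] at h
      rcases le_total X'.encard (M : ℕ∞) with h1 | h1
      · rw [min_eq_left h1] at h
        exact h.symm
      · rw [min_eq_right h1] at h
        exact absurd h hX.ne
    rcases isEmpty_or_nonempty D with hD | hD
    · rw [X.eq_empty_of_isEmpty, encard_empty, encard_eq_zero] at hX'
      exact ⟨fun _ => Classical.arbitrary K, fun k => by simp [X.eq_empty_of_isEmpty, hX']⟩
    · have hfin : X'.Finite := by
        rw [← encard_lt_top_iff, hX']
        exact hX.trans (ENat.natCast_lt_top M)
      obtain ⟨f, hf⟩ := hfin.exists_bijOn_of_encard_eq hX'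
      refine ⟨c ∘ f, fun k => ?_⟩
      have him : f '' (X' ∩ (c ∘ f) ⁻¹' {k}) = X ∩ c ⁻¹' {k} := by
        rw [preimage_comp, image_inter_preimage, hf.image_eq]
      rw [← him, (hf.injOn.mono inter_subset_left).encard_image]
  · have hX1 : (M : ℕ∞) ≤ X.encard := not_lt.1 hX
    have hX2 : (M : ℕ∞) ≤ X'.encard := by
      rw [min_eq_right hX1] at h
      exact h.le.trans (min_le_left _ _)
    set m : K → ℕ∞ := fun k => min (X ∩ c ⁻¹' {k}).encard N with hm
    let S : Set (K × ℕ) := {p | (p.2 : ℕ∞) < m p.1}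
    have hSsub : S ⊆ ((Finset.univ : Finset K) ×ˢ Finset.range N : Finset (K × ℕ)) := by
      rintro ⟨k, i⟩ hki
      have : (i : ℕ∞) < N := lt_of_lt_of_le hki (min_le_right _ _)
      simpa using this
    have hSfin : S.Finite := (Finset.finite_toSet _).subset hSsub
    have hScard : S.encard ≤ X'.encard := by
      refine (encard_le_encard hSsub).trans (le_trans ?_ hX2)
      rw [encard_coe_eq_coe_finsetCard, Finset.card_product, Finset.card_range, Finset.card_univ,
        ← Nat.card_eq_fintype_card, mul_comm]
      exact_mod_cast hM
    obtain ⟨k₀, hk₀⟩ : ∃ k₀, m k₀ = N := by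
      obtain ⟨Y, hYX, hY⟩ := exists_subset_encard_eq
        (le_trans (by exact_mod_cast hM : ((N * Nat.card K : ℕ) : ℕ∞) ≤ M) hX1)
      have hYfin : Y.Finite := by
        rw [← encard_lt_top_iff, hY]
        exact ENat.natCast_lt_top _
      obtain ⟨k, -, hk⟩ := Finset.exists_le_card_fiber_of_mul_le_card_of_maps_to
        (s := hYfin.toFinset) (t := Finset.univ) (f := c) (n := N) (fun _ _ => Finset.mem_univ _)
        Finset.univ_nonempty (by
          rw [hYfin.encard_eq_coe_toFinset_card] at hY
          rw [Finset.card_univ, ← Nat.card_eq_fintype_card, mul_comm]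
          exact_mod_cast hY.ge)
      refine ⟨k, min_eq_right ?_⟩
      calc (N : ℕ∞) ≤ (hYfin.toFinset.filter fun x => c x = k).card := by exact_mod_cast hk
        _ = ((hYfin.toFinset.filter fun x => c x = k : Finset D) : Set D).encard :=
            (encard_coe_eq_coe_finsetCard _).symm
        _ ≤ _ := encard_le_encard fun x hx => by
            simp only [Finset.coe_filter, Finite.mem_toFinset, mem_ofPred_eq] at hx
            exact ⟨hYX hx.1, hx.2⟩
    have hD' : Nonempty D' ∨ N = 0 := by
      rcases Nat.eq_zero_or_pos N with h0 | h0
      · exact Or.inr h0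
      · left
        have : (k₀, 0) ∈ S := by
          change ((0 : ℕ) : ℕ∞) < m k₀
          rw [hk₀]
          exact_mod_cast h0
        have : 0 < S.encard := encard_pos.2 ⟨_, this⟩
        obtain ⟨x, -⟩ := encard_pos.1 (this.trans_le hScard)
        exact ⟨x⟩
    rcases hD' with hD' | rfl
    swap
    · exact ⟨fun _ => k₀, fun k => by simp⟩
    obtain ⟨f, hfX, hf⟩ := hSfin.exists_injOn_of_encard_le hScard
    have hSk : ∀ k, (f '' (S ∩ Prod.fst ⁻¹' {k})).encard = m k := by
      intro k
      rw [(hf.mono inter_subset_left).encard_image]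
      have hlt : m k ≠ ⊤ := ((min_le_right _ _).trans_lt (ENat.natCast_lt_top N)).ne
      obtain ⟨j, hj⟩ := ENat.ne_top_iff_exists.1 hlt
      have : S ∩ Prod.fst ⁻¹' {k} = (fun i => (k, i)) '' (Finset.range j : Set ℕ) := by
        ext ⟨k', i⟩
        constructor
        · rintro ⟨h1, rfl⟩
          refine ⟨i, ?_, rfl⟩
          have h1 : (i : ℕ∞) < m k' := h1
          rw [← hj] at h1
          simpa using h1
        · rintro ⟨i', h1, h2⟩
          obtain ⟨rfl, rfl⟩ := Prod.mk.inj h2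
          refine ⟨?_, rfl⟩
          change (i' : ℕ∞) < m k
          rw [← hj]
          simpa using h1
      rw [this, Function.Injective.encard_image (fun a b hab => (Prod.mk.inj hab).2),
        encard_coe_eq_coe_finsetCard, Finset.card_range, hj]
    let c' : D' → K := fun d => if hd : ∃ p ∈ S, f p = d then hd.choose.1 else k₀
    have hc' : ∀ p ∈ S, c' (f p) = p.1 := by
      intro p hp
      have hd : ∃ q ∈ S, f q = f p := ⟨p, hp, rfl⟩
      simp only [c', dif_pos hd]
      rw [hf hd.choose_spec.1 hp hd.choose_spec.2]
    have hsub : ∀ k, f '' (S ∩ Prod.fst ⁻¹' {k}) ⊆ X' ∩ c' ⁻¹' {k} := by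
      rintro k _ ⟨p, ⟨hp, rfl⟩, rfl⟩
      exact ⟨hfX hp, hc' p hp⟩
    refine ⟨c', fun k => ?_⟩
    change m k = _
    by_cases hk : k = k₀
    · subst hk
      have := encard_le_encard (hsub k)
      rw [hSk, hk₀] at this
      rw [hk₀, min_eq_right this]
    · have : X' ∩ c' ⁻¹' {k} = f '' (S ∩ Prod.fst ⁻¹' {k}) := by
        refine Subset.antisymm ?_ (hsub k)
        rintro d ⟨-, hd⟩
        by_cases hp : ∃ p ∈ S, f p = d
        · obtain ⟨p, hp, rfl⟩ := hp
          exact ⟨p, ⟨hp, (hc' p hp).symm.trans hd⟩, rfl⟩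
        · exact absurd ((show k = c' d from hd.symm).trans (dif_neg hp)) hk
      rw [this, hSk, min_eq_left (min_le_right _ _)]

/-- Two assignments look alike on the variables in `S`: they give them the same colours and
identify the same pairs of them. -/
def SimilarOn {D D' K : Type} (c : D → K) (c' : D' → K) (S : Set ℕ) (σ : ℕ → D)
    (σ' : ℕ → D') : Prop :=
  (∀ x ∈ S, c (σ x) = c' (σ' x)) ∧ ∀ x ∈ S, ∀ y ∈ S, (σ x = σ y ↔ σ' x = σ' y)

theorem SimilarOn.symm {D D' K : Type} {c : D → K} {c' : D' → K} {S : Set ℕ} {σ : ℕ → D}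
    {σ' : ℕ → D'} (h : SimilarOn c c' S σ σ') : SimilarOn c' c S σ' σ :=
  ⟨fun x hx => (h.1 x hx).symm, fun x hx y hy => (h.2 x hx y hy).symm⟩

open Set in
theorem SimilarOn.exists_update {D D' K : Type} {c : D → K} {c' : D' → K} {S : Set ℕ} {N : ℕ}
    {σ : ℕ → D} {σ' : ℕ → D'} (h : SimilarOn c c' S σ σ') (hS : S ⊆ Iio N) {x : ℕ} (hx : x < N)
    (d : D) (hd : min (c ⁻¹' {c d}).encard N = min (c' ⁻¹' {c d}).encard N) :
    ∃ d', c' d' = c d ∧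
      SimilarOn c c' (insert x S) (Function.update σ x d) (Function.update σ' x d') := by
  suffices ∃ d', c' d' = c d ∧ ∀ y ∈ S, y ≠ x → (σ y = d ↔ σ' y = d') by
    obtain ⟨d', h1, h2⟩ := this
    refine ⟨d', h1, fun y hy => ?_, fun y hy z hz => ?_⟩
    · by_cases hyx : y = x
      · subst hyx
        simp [h1]
      · simpa [hyx] using h.1 y (hy.resolve_left hyx)
    · by_cases hyx : y = x <;> by_cases hzx : z = x
      · simp [hyx, hzx]
      · have := h2 z (hz.resolve_left hzx) hzx
        subst hyx
        simpa [hzx, eq_comm] using this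
      · have := h2 y (hy.resolve_left hyx) hyx
        subst hzx
        simpa [hyx] using this
      · simpa [hyx, hzx] using h.2 y (hy.resolve_left hyx) z (hz.resolve_left hzx)
  by_cases hex : ∃ y ∈ S, y ≠ x ∧ σ y = d
  · obtain ⟨y, hy, -, rfl⟩ := hex
    exact ⟨σ' y, (h.1 y hy).symm, fun z hz _ => h.2 z hz y hy⟩
  · push Not at hex
    let B : Set ℕ := {y ∈ S | y ≠ x ∧ c (σ y) = c d}
    suffices ∃ d', c' d' = c d ∧ d' ∉ σ' '' B by
      obtain ⟨d', h1, h2⟩ := this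
      refine ⟨d', h1, fun y hy hyx => iff_of_false (hex y hy hyx) fun hyd => h2 ⟨y, ⟨hy, hyx, ?_⟩, hyd⟩⟩
      rw [h.1 y hy, hyd, h1]
    by_contra! hcon
    have hBN : B ⊆ Iio N \ {x} := fun y hy => ⟨hS hy.1, hy.2.1⟩
    have hBfin : B.Finite := ((finite_Iio N).sdiff).subset hBN
    have h1 : (c' ⁻¹' {c d}).encard ≤ (σ '' B).encard := by
      have : c' ⁻¹' {c d} ⊆ (σ' ∘ Function.invFunOn σ B) '' (σ '' B) := by
        intro e he
        obtain ⟨y, hy, rfl⟩ := hcon e he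
        have hm : σ y ∈ σ '' B := ⟨y, hy, rfl⟩
        refine ⟨σ y, hm, ?_⟩
        exact (h.2 _ (Function.invFunOn_mem hm).1 _ hy.1).1 (Function.invFunOn_eq hm)
      exact (encard_le_encard this).trans (encard_image_le _ _)
    have h2 : (σ '' B).encard + 1 ≤ (c ⁻¹' {c d}).encard := by
      rw [← encard_insert_of_notMem (a := d) (s := σ '' B)]
      · refine encard_le_encard (insert_subset rfl ?_)
        rintro _ ⟨y, hy, rfl⟩
        exact hy.2.2
      · rintro ⟨y, hy, hyd⟩
        exact hex y hy.1 hy.2.1 hyd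
    have h3 : (σ '' B).encard + 1 ≤ N := by
      have : B.encard + 1 ≤ N := by
        refine (add_le_add_left (encard_le_encard hBN) 1).trans ?_
        rw [encard_sdiff_singleton_add_one (mem_Iio.2 hx)]
        have : (Iio N : Set ℕ) = (Finset.range N : Set ℕ) := by ext; simp
        rw [this, encard_coe_eq_coe_finsetCard, Finset.card_range]
      exact (add_le_add_left (encard_image_le _ _) 1).trans this
    have h4 : (σ '' B).encard + 1 ≤ (σ '' B).encard :=
      (le_min h2 h3).trans (hd.le.trans ((min_le_left _ _).trans h1))
    have h5 : (σ '' B).encard ≠ ⊤ := (hBfin.image σ).encard_lt_top.ne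
    exact absurd h4 (not_le.2 ((ENat.lt_add_one_iff h5).2 le_rfl))

/-- The colour of an element: the worlds it inhabits, and where it has each of the first `N`
predicates. -/
def elementColor {W D : Type} (Dom : W → Set D) (Vp : ℕ → W → D → Prop) (N : ℕ) (d : D) :
    Set W × (Fin N → Set W) :=
  ({w | d ∈ Dom w}, fun p => {w | Vp p w d})

/-- The colour classes of inhabitants of the two models have the same size up to the
threshold `N`. -/
def ColorsMatch {W D D' : Type} (Dom : W → Set D) (Dom' : W → Set D') (Vp : ℕ → W → D → Prop)
    (Vp' : ℕ → W → D' → Prop) (N : ℕ) : Prop :=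
  ∀ k : Set W × (Fin N → Set W), k.1.Nonempty →
    min (elementColor Dom Vp N ⁻¹' {k}).encard N = min (elementColor Dom' Vp' N ⁻¹' {k}).encard N

theorem ColorsMatch.symm {W D D' : Type} {Dom : W → Set D} {Dom' : W → Set D'}
    {Vp : ℕ → W → D → Prop} {Vp' : ℕ → W → D' → Prop} {N : ℕ}
    (h : ColorsMatch Dom Dom' Vp Vp' N) : ColorsMatch Dom' Dom Vp' Vp N :=
  fun k hk => (h k hk).symm

theorem mem_dom_iff_of_elementColor_eq {W D D' : Type} {Dom : W → Set D} {Dom' : W → Set D'}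
    {Vp : ℕ → W → D → Prop} {Vp' : ℕ → W → D' → Prop} {N : ℕ} {d : D} {d' : D'}
    (h : elementColor Dom Vp N d = elementColor Dom' Vp' N d') (w : W) :
    d ∈ Dom w ↔ d' ∈ Dom' w :=
  Set.ext_iff.1 (congrArg Prod.fst h) w

open Set in
theorem ColorsMatch.exists_update {W D D' : Type} {Dom : W → Set D} {Dom' : W → Set D'}
    {Vp : ℕ → W → D → Prop} {Vp' : ℕ → W → D' → Prop} {N : ℕ} (H : ColorsMatch Dom Dom' Vp Vp' N)
    {S : Set ℕ} {σ : ℕ → D} {σ' : ℕ → D'}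
    (h : SimilarOn (elementColor Dom Vp N) (elementColor Dom' Vp' N) S σ σ') (hS : S ⊆ Iio N)
    {x : ℕ} (hx : x < N) {w : W} {d : D} (hd : d ∈ Dom w) :
    ∃ d' ∈ Dom' w, SimilarOn (elementColor Dom Vp N) (elementColor Dom' Vp' N) (insert x S)
      (Function.update σ x d) (Function.update σ' x d') := by
  obtain ⟨d', h1, h2⟩ := h.exists_update hS hx d (H _ ⟨w, hd⟩)
  exact ⟨d', (mem_dom_iff_of_elementColor_eq h1 w).2 hd, h2⟩

open Set in
/-- Matching models satisfy the same formulas with code below the threshold. -/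
theorem ColorsMatch.sat_iff {W D D' : Type} (R : W → W → Prop) {Dom : W → Set D}
    {Dom' : W → Set D'} {Vp : ℕ → W → D → Prop} {Vp' : ℕ → W → D' → Prop} {Vq Vq' : ℕ → W → Prop}
    {N : ℕ} (H : ColorsMatch Dom Dom' Vp Vp' N) (hQ : ∀ p < N, ∀ w, Vq p w ↔ Vq' p w)
    (φ : MMF) (hφ : encodeMMF φ < N) (w : W) (σ : ℕ → D) (σ' : ℕ → D')
    (h : SimilarOn (elementColor Dom Vp N) (elementColor Dom' Vp' N) (Iio N) σ σ') :
    MMFSat R Dom Vp Vq w σ φ ↔ MMFSat R Dom' Vp' Vq' w σ' φ := by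
  have step : ∀ {x : ℕ}, x < N → ∀ {w : W} {σ : ℕ → D} {σ' : ℕ → D'},
      SimilarOn (elementColor Dom Vp N) (elementColor Dom' Vp' N) (Iio N) σ σ' →
      (∀ d ∈ Dom w, ∃ d' ∈ Dom' w, SimilarOn (elementColor Dom Vp N) (elementColor Dom' Vp' N)
        (Iio N) (Function.update σ x d) (Function.update σ' x d')) ∧
      ∀ d' ∈ Dom' w, ∃ d ∈ Dom w, SimilarOn (elementColor Dom Vp N) (elementColor Dom' Vp' N)
        (Iio N) (Function.update σ x d) (Function.update σ' x d') := by
    intro x hx w σ σ' h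
    have hins : insert x (Iio N) = Iio N := insert_eq_of_mem hx
    refine ⟨fun d hd => ?_, fun d' hd' => ?_⟩
    · simpa only [hins] using H.exists_update h Subset.rfl hx hd
    · obtain ⟨d, hd, hs⟩ := H.symm.exists_update h.symm Subset.rfl hx hd'
      rw [hins] at hs
      exact ⟨d, hd, hs.symm⟩
  induction φ generalizing w σ σ' with
  | pred p x =>
    have h1 := (Nat.right_le_pair 0 (Nat.pair p x)).trans_lt hφ
    have h2 := (Nat.left_le_pair p x).trans_lt h1
    have h3 := (Nat.right_le_pair p x).trans_lt h1
    exact Set.ext_iff.1 (congrFun (congrArg Prod.snd (h.1 x h3)) ⟨p, h2⟩) w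
  | prop p => exact hQ p ((Nat.right_le_pair 1 p).trans_lt hφ) w
  | eq x y =>
    have h1 := (Nat.right_le_pair 2 (Nat.pair x y)).trans_lt hφ
    exact h.2 x ((Nat.left_le_pair x y).trans_lt h1) y ((Nat.right_le_pair x y).trans_lt h1)
  | fls => exact Iff.rfl
  | imp φ ψ ih1 ih2 =>
    have h1 := (Nat.right_le_pair _ _).trans_lt hφ
    exact imp_congr (ih1 ((Nat.left_le_pair _ _).trans_lt h1) w σ σ' h)
      (ih2 ((Nat.right_le_pair _ _).trans_lt h1) w σ σ' h)
  | and φ ψ ih1 ih2 =>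
    have h1 := (Nat.right_le_pair _ _).trans_lt hφ
    exact and_congr (ih1 ((Nat.left_le_pair _ _).trans_lt h1) w σ σ' h)
      (ih2 ((Nat.right_le_pair _ _).trans_lt h1) w σ σ' h)
  | or φ ψ ih1 ih2 =>
    have h1 := (Nat.right_le_pair _ _).trans_lt hφ
    exact or_congr (ih1 ((Nat.left_le_pair _ _).trans_lt h1) w σ σ' h)
      (ih2 ((Nat.right_le_pair _ _).trans_lt h1) w σ σ' h)
  | box φ ih =>
    exact forall₂_congr fun v _ => ih ((Nat.right_le_pair _ _).trans_lt hφ) v σ σ' h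
  | all x φ ih =>
    have h1 := (Nat.right_le_pair _ _).trans_lt hφ
    have h2 := (Nat.right_le_pair _ _).trans_lt h1
    obtain ⟨forth, back⟩ := step ((Nat.left_le_pair _ _).trans_lt h1) (w := w) h
    constructor
    · intro hall d' hd'
      obtain ⟨d, hd, hs⟩ := back d' hd'
      exact (ih h2 w _ _ hs).1 (hall d hd)
    · intro hall d hd
      obtain ⟨d', hd', hs⟩ := forth d hd
      exact (ih h2 w _ _ hs).2 (hall d' hd')
  | ex x φ ih =>
    have h1 := (Nat.right_le_pair _ _).trans_lt hφ
    have h2 := (Nat.right_le_pair _ _).trans_lt h1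
    obtain ⟨forth, back⟩ := step ((Nat.left_le_pair _ _).trans_lt h1) (w := w) h
    constructor
    · rintro ⟨d, hd, hsat⟩
      obtain ⟨d', hd', hs⟩ := forth d hd
      exact ⟨d', hd', (ih h2 w _ _ hs).1 hsat⟩
    · rintro ⟨d', hd', hsat⟩
      obtain ⟨d, hd, hs⟩ := back d' hd'
      exact ⟨d, hd, (ih h2 w _ _ hs).2 hsat⟩

open Set in
/-- Every valuation on the first frame is matched by one on the second, when the classes of
elements inhabiting the same worlds have the same size up to a large enough threshold. -/
theorem exists_colorsMatch {W D D' : Type} [Finite W] {Dom : W → Set D} {Dom' : W → Set D'}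
    {N M : ℕ} (hM : N * Nat.card (Fin N → Set W) ≤ M)
    (h : ∀ τ : Set W, τ.Nonempty →
      min {d | {w | d ∈ Dom w} = τ}.encard M = min {d | {w | d ∈ Dom' w} = τ}.encard M)
    (Vp : ℕ → W → D → Prop) :
    ∃ Vp' : ℕ → W → D' → Prop, ColorsMatch Dom Dom' Vp Vp' N := by
  classical
  have key : ∀ τ : Set W, ∃ c' : D' → (Fin N → Set W), τ.Nonempty → ∀ k,
      min ({d | {w | d ∈ Dom w} = τ} ∩ (fun d => (elementColor Dom Vp N d).2) ⁻¹' {k}).encard N =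
        min ({d | {w | d ∈ Dom' w} = τ} ∩ c' ⁻¹' {k}).encard N := by
    intro τ
    by_cases hτ : τ.Nonempty
    · obtain ⟨c', hc'⟩ := exists_coloring_min_encard_eq hM (h τ hτ)
        (fun d => (elementColor Dom Vp N d).2)
      exact ⟨c', fun _ => hc'⟩
    · exact ⟨fun _ _ => ∅, fun hτ' => absurd hτ' hτ⟩
  choose c' hc' using key
  refine ⟨fun p w d => if hp : p < N then w ∈ c' {w | d ∈ Dom' w} d ⟨p, hp⟩ else False, ?_⟩
  rintro ⟨τ, k⟩ hτ
  convert hc' τ hτ k using 3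
  · ext d
    simp [elementColor, Prod.ext_iff]
  · ext d
    simp only [elementColor, mem_preimage, mem_singleton_iff, Prod.ext_iff, mem_inter_iff,
      mem_ofPred_eq, Fin.is_lt, dite_true]
    constructor
    · rintro ⟨rfl, h2⟩
      exact ⟨rfl, h2⟩
    · rintro ⟨rfl, h2⟩
      exact ⟨rfl, h2⟩

/-- The tag, the payload shape, and nothing else, are those of the code of a formula. -/
def IsCodeHead (n : ℕ) : Prop :=
  n.unpair.1 < 3 ∨ (n.unpair.1 = 3 ∧ n.unpair.2 = 0) ∨ (3 < n.unpair.1 ∧ n.unpair.1 < 10)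

/-- The codes of the immediate subformulas. -/
def subcodes (n : ℕ) : List ℕ :=
  if n.unpair.1 < 4 then []
  else if n.unpair.1 < 7 then [n.unpair.2.unpair.1, n.unpair.2.unpair.2]
  else if n.unpair.1 = 7 then [n.unpair.2]
  else [n.unpair.2.unpair.2]

theorem unpair_snd_lt {n : ℕ} (h : n.unpair.1 ≠ 0) : n.unpair.2 < n := by
  obtain ⟨a, b, rfl⟩ : ∃ a b, n = Nat.pair a b := ⟨_, _, (Nat.pair_unpair n).symm⟩
  rw [Nat.unpair_pair] at h ⊢
  simp only [Nat.pair] at h ⊢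
  split_ifs with hab
  · have := Nat.le_mul_self b
    omega
  · have := Nat.mul_pos (Nat.pos_of_ne_zero h) (Nat.pos_of_ne_zero h)
    omega

theorem lt_of_mem_subcodes {n m : ℕ} (h : m ∈ subcodes n) : m < n := by
  have h1 := Nat.unpair_left_le n.unpair.2
  have h2 := Nat.unpair_right_le n.unpair.2
  unfold subcodes at h
  split_ifs at h with h4 h7 h8
  · simp at h
  all_goals
    have h3 := unpair_snd_lt (n := n) (by omega)
    simp only [List.mem_cons, List.not_mem_nil, or_false] at h
    omega

theorem exists_encodeMMF_eq_iff (n : ℕ) :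
    (∃ φ, encodeMMF φ = n) ↔ IsCodeHead n ∧ ∀ m ∈ subcodes n, ∃ φ, encodeMMF φ = m := by
  constructor
  · rintro ⟨φ, rfl⟩
    cases φ <;> simp [encodeMMF, IsCodeHead, subcodes]
  · obtain ⟨t, p, rfl⟩ : ∃ a b, n = Nat.pair a b := ⟨_, _, (Nat.pair_unpair n).symm⟩
    obtain ⟨x, y, rfl⟩ : ∃ a b, p = Nat.pair a b := ⟨_, _, (Nat.pair_unpair p).symm⟩
    rintro ⟨hhead, hsub⟩
    simp only [IsCodeHead, Nat.unpair_pair] at hhead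
    have ht : t < 10 := by omega
    interval_cases t <;> simp [subcodes] at hsub
    · exact ⟨.pred x y, rfl⟩
    · exact ⟨.prop _, rfl⟩
    · exact ⟨.eq x y, rfl⟩
    · refine ⟨.fls, ?_⟩
      simp only [encodeMMF]
      congr 1
      omega
    · obtain ⟨⟨φ, rfl⟩, ψ, rfl⟩ := hsub
      exact ⟨.imp φ ψ, rfl⟩
    · obtain ⟨⟨φ, rfl⟩, ψ, rfl⟩ := hsub
      exact ⟨.and φ ψ, rfl⟩
    · obtain ⟨⟨φ, rfl⟩, ψ, rfl⟩ := hsub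
      exact ⟨.or φ ψ, rfl⟩
    · obtain ⟨φ, hφ⟩ := hsub
      exact ⟨.box φ, by simp [encodeMMF, hφ]⟩
    · obtain ⟨φ, rfl⟩ := hsub
      exact ⟨.all x φ, rfl⟩
    · obtain ⟨φ, rfl⟩ := hsub
      exact ⟨.ex x φ, rfl⟩

theorem encodeMMF_injective : Function.Injective encodeMMF := by
  intro φ
  induction φ with
  | imp φ ψ ih1 ih2 | and φ ψ ih1 ih2 | or φ ψ ih1 ih2 =>
    intro χ h
    cases χ <;> simp only [encodeMMF, Nat.pair_eq_pair] at h <;> first | omega | skip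
    rw [ih1 h.2.1, ih2 h.2.2]
  | box φ ih =>
    intro χ h
    cases χ <;> simp only [encodeMMF, Nat.pair_eq_pair] at h <;> first | omega | skip
    rw [ih h.2]
  | all x φ ih | ex x φ ih =>
    intro χ h
    cases χ <;> simp only [encodeMMF, Nat.pair_eq_pair] at h <;> first | omega | skip
    rw [h.2.1, ih h.2.2]
  | _ =>
    intro χ h
    cases χ <;> simp only [encodeMMF, Nat.pair_eq_pair] at h <;> first | omega | simp_all

theorem primrec_unpair_fst : Primrec fun n : ℕ => n.unpair.1 :=
  Primrec.fst.comp Primrec.unpair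

theorem primrec_unpair_snd : Primrec fun n : ℕ => n.unpair.2 :=
  Primrec.snd.comp Primrec.unpair

theorem primrec_singleton {α : Type} [Primcodable α] : Primrec fun a : α => [a] :=
  Primrec.list_cons.comp Primrec.id (Primrec.const [])

theorem PrimrecPred.eq_const {α β : Type} [Primcodable α] [Primcodable β] {f : α → β}
    (hf : Primrec f) (b : β) : PrimrecPred fun a => f a = b :=
  Primrec.eq.comp hf (Primrec.const b)

theorem primrec_subcodes : Primrec subcodes := by
  have h1 := primrec_unpair_fst
  have h2 := primrec_unpair_snd
  refine Primrec.ite (Primrec.nat_lt.comp h1 (Primrec.const 4)) (Primrec.const [])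
    (Primrec.ite (Primrec.nat_lt.comp h1 (Primrec.const 7)) ?_
      (Primrec.ite (PrimrecPred.eq_const h1 7) ?_ ?_))
  · exact Primrec.list_cons.comp (h1.comp h2) (primrec_singleton.comp (h2.comp h2))
  · exact primrec_singleton.comp h2
  · exact primrec_singleton.comp (h2.comp h2)

theorem primrecPred_isCodeHead : PrimrecPred IsCodeHead := by
  have h1 := primrec_unpair_fst
  have h2 := primrec_unpair_snd
  exact (Primrec.nat_lt.comp h1 (Primrec.const 3)).or
    (((PrimrecPred.eq_const h1 3).and (PrimrecPred.eq_const h2 0)).or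
      ((Primrec.nat_lt.comp (Primrec.const 3) h1).and
        (Primrec.nat_lt.comp h1 (Primrec.const 10))))

theorem primrecPred_forall_true : PrimrecPred fun L : List Bool => ∀ a ∈ L, a = true :=
  PrimrecPred.forall_mem_list (PrimrecPred.eq_const Primrec.id true)

theorem primrecPred_exists_true : PrimrecPred fun L : List Bool => ∃ a ∈ L, a = true :=
  PrimrecPred.exists_mem_list (PrimrecPred.eq_const Primrec.id true)

theorem primrecPred_exists_encodeMMF_eq : PrimrecPred fun n => ∃ φ, encodeMMF φ = n := by
  classical
  refine ⟨inferInstance, ?_⟩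
  have hg : PrimrecPred fun x : ℕ × List Bool => IsCodeHead x.1 ∧ ∀ a ∈ x.2, a = true :=
    (primrecPred_isCodeHead.comp Primrec.fst).and (primrecPred_forall_true.comp Primrec.snd)
  refine Primrec.nat_omega_rec' _ (m := id) (l := subcodes)
    (g := fun n L => some (decide (IsCodeHead n ∧ ∀ a ∈ L, a = true))) Primrec.id
    primrec_subcodes (Primrec.option_some.comp hg.decide) (fun n m hm => lt_of_mem_subcodes hm) ?_
  intro n
  simp only [List.forall_mem_map, decide_eq_true_eq, exists_encodeMMF_eq_iff n]

/-- A finite model given by lists: which elements inhabit which worlds, where the unary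
predicates hold, and where the propositional letters hold. -/
abbrev ListModel (W α : Type) : Type := List (W × α) × List (ℕ × W × α) × List (ℕ × W)

/-- The assignment given by a list of variable bindings, earlier ones taking precedence. -/
def assignmentOf {α : Type} (d₀ : α) (s : List (ℕ × α)) (x : ℕ) : α :=
  s.foldr (fun b d => if x = b.1 then b.2 else d) d₀

theorem assignmentOf_cons {α : Type} (d₀ : α) (x : ℕ) (d : α) (s : List (ℕ × α)) :
    assignmentOf d₀ ((x, d) :: s) = Function.update (assignmentOf d₀ s) x d := by
  funext y
  simp [assignmentOf, Function.update_apply]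

theorem primrec_assignmentOf {α : Type} [Primcodable α] (d₀ : α) :
    Primrec₂ (assignmentOf d₀) := by
  refine Primrec.list_foldr (f := fun a : List (ℕ × α) × ℕ => a.1) (g := fun _ => d₀)
    (h := fun a b => if a.2 = b.1.1 then b.1.2 else b.2) Primrec.fst (Primrec.const d₀) ?_
  exact Primrec.ite (Primrec.eq.comp (Primrec.snd.comp Primrec.fst)
    (Primrec.fst.comp (Primrec.fst.comp Primrec.snd)))
    (Primrec.snd.comp (Primrec.fst.comp Primrec.snd)) (Primrec.snd.comp Primrec.snd)

/-- Satisfaction in a model given by lists. -/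
def ListModel.Sat {W α : Type} (R : W → W → Prop) (d₀ : α) (m : ListModel W α) (w : W)
    (s : List (ℕ × α)) (φ : MMF) : Prop :=
  MMFSat R (fun w => {d | (w, d) ∈ m.1}) (fun p w d => (p, w, d) ∈ m.2.1)
    (fun p w => (p, w) ∈ m.2.2) w (assignmentOf d₀ s) φ

/-- The elements paired with `w` in a list. -/
def fiberList {W α : Type} [DecidableEq W] (A : List (W × α)) (w : W) : List α :=
  (A.filter fun a => a.1 = w).map Prod.snd

theorem mem_fiberList {W α : Type} [DecidableEq W] {A : List (W × α)} {w : W} {d : α} :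
    d ∈ fiberList A w ↔ (w, d) ∈ A := by
  simp [fiberList]

theorem primrec_fiberList {W α : Type} [DecidableEq W] [Primcodable W] [Primcodable α] :
    Primrec₂ (fiberList : List (W × α) → W → List α) := by
  have hR : PrimrecRel fun (a : W × α) (w : W) => a.1 = w :=
    Primrec.eq.comp (Primrec.fst.comp Primrec.fst) Primrec.snd
  exact Primrec.list_map hR.listFilter (Primrec.snd.comp Primrec.snd)

theorem primrecRel_mem {α : Type} [Primcodable α] :
    PrimrecRel fun (a : α) (L : List α) => a ∈ L := by
  have h : PrimrecRel fun (L : List α) (a : α) => ∃ b ∈ L, b = a :=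
    PrimrecRel.exists_mem_list Primrec.eq
  exact (h.comp Primrec.snd Primrec.fst).of_eq fun x => by simp

/-- A code to be evaluated in a model at a world under an assignment. -/
abbrev EvalConfig (W α : Type) : Type := ℕ × ListModel W α × W × List (ℕ × α)

/-- The evaluations to which an evaluation reduces. -/
def subEvals {W α : Type} [DecidableEq W] (succ : W → List W) (c : EvalConfig W α) :
    List (EvalConfig W α) :=
  if c.1.unpair.1 < 7 then (subcodes c.1).map fun k => (k, c.2)
  else if c.1.unpair.1 = 7 then
    (subcodes c.1).flatMap fun k => (succ c.2.2.1).map fun v => (k, c.2.1, v, c.2.2.2)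
  else
    (subcodes c.1).flatMap fun k => (fiberList c.2.1.1 c.2.2.1).map fun d =>
      (k, c.2.1, c.2.2.1, (c.1.unpair.2.unpair.1, d) :: c.2.2.2)

theorem primrec_subEvals {W α : Type} [DecidableEq W] [Primcodable W] [Primcodable α]
    {succ : W → List W} (hsucc : Primrec succ) :
    Primrec (subEvals succ : EvalConfig W α → List (EvalConfig W α)) := by
  have htag : Primrec fun c : EvalConfig W α => c.1.unpair.1 :=
    primrec_unpair_fst.comp Primrec.fst
  have hsub : Primrec fun c : EvalConfig W α => subcodes c.1 := primrec_subcodes.comp Primrec.fst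
  have hworld : Primrec fun c : EvalConfig W α => c.2.2.1 :=
    Primrec.fst.comp (Primrec.snd.comp Primrec.snd)
  have hmodel : Primrec fun c : EvalConfig W α => c.2.1 := Primrec.fst.comp Primrec.snd
  have hbind : Primrec fun c : EvalConfig W α => c.2.2.2 :=
    Primrec.snd.comp (Primrec.snd.comp Primrec.snd)
  have hvar : Primrec fun c : EvalConfig W α => c.1.unpair.2.unpair.1 :=
    primrec_unpair_fst.comp (primrec_unpair_snd.comp Primrec.fst)
  refine Primrec.ite (Primrec.nat_lt.comp htag (Primrec.const 7)) ?_
    (Primrec.ite (PrimrecPred.eq_const htag 7) ?_ ?_)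
  · exact Primrec.list_map hsub (Primrec.pair Primrec.snd (Primrec.snd.comp Primrec.fst))
  · refine Primrec.list_flatMap hsub (Primrec.list_map
      (hsucc.comp (hworld.comp Primrec.fst)) ?_)
    exact Primrec.pair (Primrec.snd.comp Primrec.fst)
      (Primrec.pair (hmodel.comp (Primrec.fst.comp Primrec.fst))
        (Primrec.pair Primrec.snd (hbind.comp (Primrec.fst.comp Primrec.fst))))
  · refine Primrec.list_flatMap hsub (Primrec.list_map
      (primrec_fiberList.comp (Primrec.fst.comp (hmodel.comp Primrec.fst))
        (hworld.comp Primrec.fst)) ?_)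
    exact Primrec.pair (Primrec.snd.comp Primrec.fst)
      (Primrec.pair (hmodel.comp (Primrec.fst.comp Primrec.fst))
        (Primrec.pair (hworld.comp (Primrec.fst.comp Primrec.fst))
          (Primrec.list_cons.comp
            (Primrec.pair (hvar.comp (Primrec.fst.comp Primrec.fst)) Primrec.snd)
            (hbind.comp (Primrec.fst.comp Primrec.fst)))))

theorem lt_of_mem_subEvals {W α : Type} [DecidableEq W] {succ : W → List W}
    {c c' : EvalConfig W α} (h : c' ∈ subEvals succ c) : c'.1 < c.1 := by
  unfold subEvals at h
  split_ifs at h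
  · obtain ⟨k, hk, rfl⟩ := List.mem_map.1 h
    exact lt_of_mem_subcodes hk
  all_goals
    obtain ⟨k, hk, h⟩ := List.mem_flatMap.1 h
    obtain ⟨v, -, rfl⟩ := List.mem_map.1 h
    exact lt_of_mem_subcodes hk

/-- How the truth value of a formula is obtained from those of its instances listed by
`subEvals`. -/
def CombineEvals {W α : Type} (d₀ : α) (c : EvalConfig W α) (L : List Bool) : Prop :=
  (c.1.unpair.1 = 0 ∧ (c.1.unpair.2.unpair.1, c.2.2.1,
    assignmentOf d₀ c.2.2.2 c.1.unpair.2.unpair.2) ∈ c.2.1.2.1) ∨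
  (c.1.unpair.1 = 1 ∧ (c.1.unpair.2, c.2.2.1) ∈ c.2.1.2.2) ∨
  (c.1.unpair.1 = 2 ∧ assignmentOf d₀ c.2.2.2 c.1.unpair.2.unpair.1 =
    assignmentOf d₀ c.2.2.2 c.1.unpair.2.unpair.2) ∨
  (c.1.unpair.1 = 4 ∧ (¬ L.headI = true ∨ L.tail.headI = true)) ∨
  ((c.1.unpair.1 = 5 ∨ c.1.unpair.1 = 7 ∨ c.1.unpair.1 = 8) ∧ ∀ b ∈ L, b = true) ∨
  ((c.1.unpair.1 = 6 ∨ c.1.unpair.1 = 9) ∧ ∃ b ∈ L, b = true)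

theorem primrecPred_combineEvals {W α : Type} [Primcodable W] [Primcodable α] (d₀ : α) :
    PrimrecPred fun x : EvalConfig W α × List Bool => CombineEvals d₀ x.1 x.2 := by
  have hcode : Primrec fun x : EvalConfig W α × List Bool => x.1.1 :=
    Primrec.fst.comp Primrec.fst
  have htag := primrec_unpair_fst.comp hcode
  have hpay := primrec_unpair_snd.comp hcode
  have hp1 := primrec_unpair_fst.comp hpay
  have hp2 := primrec_unpair_snd.comp hpay
  have hmodel : Primrec fun x : EvalConfig W α × List Bool => x.1.2.1 :=
    Primrec.fst.comp (Primrec.snd.comp Primrec.fst)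
  have hworld : Primrec fun x : EvalConfig W α × List Bool => x.1.2.2.1 :=
    Primrec.fst.comp (Primrec.snd.comp (Primrec.snd.comp Primrec.fst))
  have hbind : Primrec fun x : EvalConfig W α × List Bool => x.1.2.2.2 :=
    Primrec.snd.comp (Primrec.snd.comp (Primrec.snd.comp Primrec.fst))
  have hasg := primrec_assignmentOf d₀
  refine ((PrimrecPred.eq_const htag 0).and ?_).or (((PrimrecPred.eq_const htag 1).and ?_).or
    (((PrimrecPred.eq_const htag 2).and ?_).or (((PrimrecPred.eq_const htag 4).and ?_).or
      ((((PrimrecPred.eq_const htag 5).or ((PrimrecPred.eq_const htag 7).or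
        (PrimrecPred.eq_const htag 8))).and ?_).or (((PrimrecPred.eq_const htag 6).or
          (PrimrecPred.eq_const htag 9)).and ?_)))))
  · exact primrecRel_mem.comp (Primrec.pair hp1 (Primrec.pair hworld (hasg.comp hbind hp2)))
      (Primrec.fst.comp (Primrec.snd.comp hmodel))
  · exact primrecRel_mem.comp (Primrec.pair hpay hworld)
      (Primrec.snd.comp (Primrec.snd.comp hmodel))
  · exact Primrec.eq.comp (hasg.comp hbind hp1) (hasg.comp hbind hp2)
  · exact (PrimrecPred.eq_const (Primrec.list_headI.comp Primrec.snd) true).not.or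
      (PrimrecPred.eq_const (Primrec.list_headI.comp (Primrec.list_tail.comp Primrec.snd)) true)
  · exact primrecPred_forall_true.comp Primrec.snd
  · exact primrecPred_exists_true.comp Primrec.snd

/-- Model checking: satisfaction in models given by lists is primitive recursive. -/
theorem primrecPred_listModel_sat {W α : Type} [DecidableEq W] [Primcodable W] [Primcodable α]
    (R : W → W → Prop) {succ : W → List W} (hsucc : Primrec succ)
    (hR : ∀ w v, v ∈ succ w ↔ R w v) (d₀ : α) :
    PrimrecPred fun c : EvalConfig W α =>
      ∃ φ, encodeMMF φ = c.1 ∧ ListModel.Sat R d₀ c.2.1 c.2.2.1 c.2.2.2 φ := by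
  classical
  refine ⟨fun _ => Classical.propDecidable _, ?_⟩
  have hg : PrimrecPred fun x : EvalConfig W α × List Bool =>
      (∃ φ, encodeMMF φ = x.1.1) ∧ CombineEvals d₀ x.1 x.2 :=
    (primrecPred_exists_encodeMMF_eq.comp (Primrec.fst.comp Primrec.fst)).and
      (primrecPred_combineEvals d₀)
  refine Primrec.nat_omega_rec' _ (m := Prod.fst) (l := subEvals succ)
    (g := fun c L => some (decide ((∃ φ, encodeMMF φ = c.1) ∧ CombineEvals d₀ c L)))
    Primrec.fst (primrec_subEvals hsucc) (Primrec.option_some.comp hg.decide)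
    (fun c c' h => lt_of_mem_subEvals h) ?_
  rintro ⟨n, m, w, s⟩
  congr 1
  rw [decide_eq_decide]
  by_cases hn : ∃ φ, encodeMMF φ = n
  swap
  · exact ⟨fun h => absurd h.1 hn, fun ⟨φ, h, _⟩ => absurd ⟨φ, h⟩ hn⟩
  obtain ⟨φ, rfl⟩ := hn
  have hcode : ∀ ψ m w s, (∃ χ, encodeMMF χ = encodeMMF ψ ∧ ListModel.Sat R d₀ m w s χ) ↔
      ListModel.Sat R d₀ m w s ψ :=
    fun ψ m w s => ⟨fun ⟨χ, h1, h2⟩ => encodeMMF_injective h1 ▸ h2, fun h => ⟨ψ, rfl, h⟩⟩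
  refine (and_iff_right ⟨φ, rfl⟩).trans (Iff.trans ?_ (hcode φ m w s).symm)
  cases φ <;>
    simp only [CombineEvals, subEvals, subcodes, encodeMMF] <;>
    simp [hcode] <;>
    simp [ListModel.Sat, MMFSat, hR, mem_fiberList, assignmentOf_cons, imp_iff_not_or]

/-- All sublists of a list. -/
def allSublists {α : Type} (l : List α) : List (List α) :=
  l.foldr (fun a acc => acc ++ acc.map (List.cons a)) [[]]

theorem filter_mem_allSublists {α : Type} (p : α → Bool) (l : List α) :
    l.filter p ∈ allSublists l := by
  induction l with
  | nil => simp [allSublists]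
  | cons a l ih =>
    rw [allSublists] at ih ⊢
    rw [List.foldr_cons, List.mem_append, List.mem_map, List.filter_cons]
    split_ifs
    · exact Or.inr ⟨_, ih, rfl⟩
    · exact Or.inl ih

theorem primrec_allSublists {α : Type} [Primcodable α] :
    Primrec (allSublists : List α → List (List α)) := by
  refine Primrec.list_foldr (f := fun l : List α => l) (g := fun _ => [[]])
    (h := fun (_ : List α) (b : α × List (List α)) => b.2 ++ b.2.map (List.cons b.1))
    Primrec.id (Primrec.const _) ?_
  refine Primrec.list_append.comp (Primrec.snd.comp Primrec.snd)
    (Primrec.list_map (Primrec.snd.comp Primrec.snd) ?_)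
  exact Primrec.list_cons.comp (Primrec.fst.comp (Primrec.snd.comp Primrec.fst)) Primrec.snd

/-- All lists binding each of the variables below `k` to a member of `l`. -/
def allBindings {α : Type} (l : List α) : ℕ → List (List (ℕ × α))
  | 0 => [[]]
  | k + 1 => (allBindings l k).flatMap fun s => l.map fun d => (k, d) :: s

theorem primrec_allBindings {α : Type} [Primcodable α] :
    Primrec₂ (allBindings : List α → ℕ → List (List (ℕ × α))) := by
  have h : Primrec₂ fun (l : List α) (a : ℕ × List (List (ℕ × α))) =>
      a.2.flatMap fun s => l.map fun d => (a.1, d) :: s := by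
    refine Primrec.list_flatMap (Primrec.snd.comp Primrec.snd)
      (Primrec.list_map (Primrec.fst.comp Primrec.fst) ?_)
    exact Primrec.list_cons.comp
      (Primrec.pair (Primrec.fst.comp (Primrec.snd.comp (Primrec.fst.comp Primrec.fst)))
        Primrec.snd)
      (Primrec.snd.comp Primrec.fst)
  refine (Primrec.nat_rec (Primrec.const [[]]) h).of_eq fun l k => ?_
  induction k with
  | zero => rfl
  | succ k ih => simp only [allBindings, ← ih]

theorem assignmentOf_mem_of_mem_allBindings {α : Type} (d₀ : α) {l : List α} {k : ℕ}
    {s : List (ℕ × α)} (hs : s ∈ allBindings l k) {x : ℕ} (hx : x < k) :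
    assignmentOf d₀ s x ∈ l := by
  induction k generalizing s with
  | zero => omega
  | succ k ih =>
    obtain ⟨t, ht, hs⟩ := List.mem_flatMap.1 hs
    obtain ⟨d, hd, rfl⟩ := List.mem_map.1 hs
    rw [assignmentOf_cons, Function.update_apply]
    split_ifs with hxk
    · exact hd
    · exact ih ht (by omega)

theorem exists_mem_allBindings {α : Type} (d₀ : α) {l : List α} {k : ℕ} {σ : ℕ → α}
    (hσ : ∀ x < k, σ x ∈ l) :
    ∃ s ∈ allBindings l k, ∀ x < k, assignmentOf d₀ s x = σ x := by
  induction k with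
  | zero => exact ⟨[], by simp [allBindings]⟩
  | succ k ih =>
    obtain ⟨s, hs, hsσ⟩ := ih fun x hx => hσ x (by omega)
    refine ⟨(k, σ k) :: s, List.mem_flatMap.2 ⟨s, hs, List.mem_map.2 ⟨_, hσ k (by omega), rfl⟩⟩,
      fun x hx => ?_⟩
    rw [assignmentOf_cons, Function.update_apply]
    split_ifs with hxk
    · rw [hxk]
    · exact hsσ x (by omega)

theorem SimilarOn.congr {D D' K : Type} {c : D → K} {c' : D' → K} {S : Set ℕ} {σ τ : ℕ → D}
    {σ' τ' : ℕ → D'} (h : SimilarOn c c' S σ σ') (hτ : ∀ x ∈ S, τ x = σ x)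
    (hτ' : ∀ x ∈ S, τ' x = σ' x) : SimilarOn c c' S τ τ' :=
  ⟨fun x hx => by rw [hτ x hx, hτ' x hx, h.1 x hx],
    fun x hx y hy => by rw [hτ x hx, hτ' x hx, hτ y hy, hτ' y hy, h.2 x hx y hy]⟩

theorem ColorsMatch.nonempty {W D D' : Type} {Dom : W → Set D} {Dom' : W → Set D'}
    {Vp : ℕ → W → D → Prop} {Vp' : ℕ → W → D' → Prop} {N : ℕ} (H : ColorsMatch Dom Dom' Vp Vp' N)
    (hN : 0 < N) {w : W} {d : D} (hd : d ∈ Dom w) : Nonempty D' := by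
  by_contra hD'
  rw [not_nonempty_iff] at hD'
  have h := H (elementColor Dom Vp N d) ⟨w, hd⟩
  rw [Set.eq_empty_of_isEmpty (elementColor Dom' Vp' N ⁻¹' _), Set.encard_empty, zero_min] at h
  rcases min_eq_iff.1 h with h | h
  · exact Set.eq_empty_iff_forall_notMem.1 (Set.encard_eq_zero.1 h.1) d rfl
  · exact hN.ne' (by exact_mod_cast h.1)

open Set in
/-- An assignment into a world's domain is imitated by one in a matching model. -/
theorem ColorsMatch.exists_assignment {W D D' : Type} {Dom : W → Set D} {Dom' : W → Set D'}
    {Vp : ℕ → W → D → Prop} {Vp' : ℕ → W → D' → Prop} {N : ℕ} (H : ColorsMatch Dom Dom' Vp Vp' N)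
    (hN : 0 < N) {w : W} {σ : ℕ → D} (hσ : ∀ x < N, σ x ∈ Dom w) :
    ∃ σ' : ℕ → D', (∀ x, σ' x ∈ Dom' w) ∧
      SimilarOn (elementColor Dom Vp N) (elementColor Dom' Vp' N) (Iio N) σ σ' := by
  obtain ⟨d₀⟩ := H.nonempty hN (hσ 0 hN)
  have key : ∀ k ≤ N, ∃ σ' : ℕ → D',
      SimilarOn (elementColor Dom Vp N) (elementColor Dom' Vp' N) (Iio k) σ σ' := by
    intro k
    induction k with
    | zero => exact fun _ => ⟨fun _ => d₀, by simp [SimilarOn]⟩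
    | succ k ih =>
      intro hk
      obtain ⟨σ', h⟩ := ih (by omega)
      obtain ⟨d', -, h'⟩ := H.exists_update h (Iio_subset_Iio (by omega)) (x := k) (by omega)
        (hσ k (by omega))
      have hins : insert k (Iio k) = Iio (k + 1) := by
        ext x
        simp only [mem_insert_iff, mem_Iio]
        omega
      rw [Function.update_eq_self, hins] at h'
      exact ⟨_, h'⟩
  obtain ⟨σ', h⟩ := key N le_rfl
  refine ⟨fun x => if x < N then σ' x else σ' 0, fun x => ?_,
    h.congr (fun _ _ => rfl) fun x hx => if_pos hx⟩
  dsimp only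
  split_ifs with hx
  · exact (mem_dom_iff_of_elementColor_eq (h.1 x hx) w).1 (hσ x hx)
  · exact (mem_dom_iff_of_elementColor_eq (h.1 0 hN) w).1 (hσ 0 hN)

section FiniteApproximation

variable {W D : Type}

/-- The number of elements inhabiting exactly the worlds in `τ`, truncated at `M`. -/
noncomputable def truncatedClassCard (Dom : W → Set D) (M : ℕ) (τ : Set W) : ℕ :=
  (min {d | {w | d ∈ Dom w} = τ}.encard M).toNat

open Classical in
/-- The inhabitants of the worlds of the frame whose classes of elements inhabiting the same worlds
are truncated at size `M`; the pair `(τ, i)` is the `i`-th inhabitant of exactly the worlds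
in `τ`. -/
noncomputable def truncatedInhabitants [Fintype W] (Dom : W → Set D) (M : ℕ) :
    List (W × Set W × ℕ) :=
  (Finset.univ.filter fun a : W × Set W => a.1 ∈ a.2).toList.flatMap fun a =>
    (List.range (truncatedClassCard Dom M a.2)).map fun i => (a.1, a.2, i)

theorem mem_truncatedInhabitants [Fintype W] {Dom : W → Set D} {M : ℕ} {w : W} {τ : Set W}
    {i : ℕ} : (w, τ, i) ∈ truncatedInhabitants Dom M ↔ w ∈ τ ∧ i < truncatedClassCard Dom M τ := by
  simp [truncatedInhabitants]

open Set in
theorem truncatedInhabitants_min_encard_eq [Fintype W] (Dom : W → Set D) (M : ℕ) {τ : Set W}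
    (hτ : τ.Nonempty) :
    min {d | {w | d ∈ Dom w} = τ}.encard M =
      min {d : Set W × ℕ | {w | (w, d) ∈ truncatedInhabitants Dom M} = τ}.encard M := by
  have hset : {d : Set W × ℕ | {w | (w, d) ∈ truncatedInhabitants Dom M} = τ} =
      (fun i => (τ, i)) '' (Finset.range (truncatedClassCard Dom M τ) : Set ℕ) := by
    ext ⟨τ', i⟩
    simp only [mem_truncatedInhabitants, mem_ofPred_eq, mem_image, Finset.coe_range, mem_Iio,
      Prod.mk.injEq]
    constructor
    · intro h
      obtain ⟨w, hw⟩ := hτ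
      have hi : i < truncatedClassCard Dom M τ' := (h ▸ hw : w ∈ {w | _ ∧ _}).2
      obtain rfl : τ' = τ := by rw [← h]; ext v; simp [hi]
      exact ⟨i, hi, rfl, rfl⟩
    · rintro ⟨j, hj, rfl, rfl⟩
      ext v
      simp [hj]
  rw [hset, Function.Injective.encard_image (fun a b hab => (Prod.mk.inj hab).2),
    encard_coe_eq_coe_finsetCard, Finset.card_range, truncatedClassCard, ENat.natCast_toNat, min_assoc,
    min_self]
  exact ((min_le_right _ _).trans_lt (ENat.natCast_lt_top M)).ne

/-- A truncation threshold large enough for formulas with code `n`. -/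
noncomputable def truncationBound (W : Type) (n : ℕ) : ℕ := (n + 1) * Nat.card (Set W) ^ (n + 1)

theorem mul_card_le_truncationBound (W : Type) [Finite W] (n : ℕ) :
    (n + 1) * Nat.card (Fin (n + 1) → Set W) ≤ truncationBound W n := by
  simp [truncationBound, Nat.card_fun]

/-- The evaluations of the code `n` that decide validity: in every model given by lists based on
the truncated frame, at every world, under every assignment into that world's domain. -/
noncomputable def validityConfigs [Fintype W] [DecidableEq W] (Dom : W → Set D) (n : ℕ) :
    List (EvalConfig W (Set W × ℕ)) :=
  let A := truncatedInhabitants Dom (truncationBound W n)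
  (allSublists ((List.range (n + 1)).flatMap fun p => (Finset.univ : Finset W).toList.flatMap
      fun w => A.map fun a => (p, w, a.2))).flatMap fun V =>
    (allSublists ((List.range (n + 1)).flatMap fun p => (Finset.univ : Finset W).toList.map
      fun w => (p, w))).flatMap fun Q =>
      (Finset.univ : Finset W).toList.flatMap fun w =>
        (allBindings (fiberList A w) (n + 1)).map fun s => (n, (A, V, Q), w, s)

open Set in
theorem mmfValid_iff_forall_mem_validityConfigs [Fintype W] [DecidableEq W] (R : W → W → Prop)
    (Dom : W → Set D) (d₀ : Set W × ℕ) (φ : MMF) :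
    MMFValid R Dom φ ↔ ∀ c ∈ validityConfigs Dom (encodeMMF φ),
      ListModel.Sat R d₀ c.2.1 c.2.2.1 c.2.2.2 φ := by
  classical
  set n := encodeMMF φ with hn
  let A := truncatedInhabitants Dom (truncationBound W n)
  let Dom' : W → Set (Set W × ℕ) := fun w => {d | (w, d) ∈ A}
  have hclass : ∀ τ : Set W, τ.Nonempty →
      min {d | {w | d ∈ Dom w} = τ}.encard (truncationBound W n) =
        min {d | {w | d ∈ Dom' w} = τ}.encard (truncationBound W n) :=
    fun τ hτ => truncatedInhabitants_min_encard_eq Dom _ hτ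
  have hbound := mul_card_le_truncationBound W n
  constructor
  · intro hvalid c hc
    simp only [validityConfigs, List.mem_flatMap, List.mem_map] at hc
    obtain ⟨V, -, Q, -, w, -, s, hs, rfl⟩ := hc
    obtain ⟨Vp, H⟩ := exists_colorsMatch hbound (fun τ hτ => (hclass τ hτ).symm)
      fun p w d => (p, w, d) ∈ V
    obtain ⟨σ, hσ, hsim⟩ := H.exists_assignment (w := w) (σ := assignmentOf d₀ s) (by omega)
      fun x hx => mem_fiberList.1 (assignmentOf_mem_of_mem_allBindings d₀ hs hx)
    exact (H.sat_iff R (fun _ _ _ => Iff.rfl) φ (by omega) w _ σ hsim).2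
      (hvalid Vp (fun p w => (p, w) ∈ Q) w σ hσ)
  · intro hall Vp Vq w σ hσ
    obtain ⟨Vp', H⟩ := exists_colorsMatch hbound hclass Vp
    let V := ((List.range (n + 1)).flatMap fun p => (Finset.univ : Finset W).toList.flatMap
      fun w => A.map fun a => (p, w, a.2)).filter fun f => Vp' f.1 f.2.1 f.2.2
    let Q := ((List.range (n + 1)).flatMap fun p => (Finset.univ : Finset W).toList.map
      fun w => (p, w)).filter fun f => Vq f.1 f.2
    have hcolor : ∀ v d, d ∈ Dom' v → elementColor Dom' (fun p w d => (p, w, d) ∈ V) (n + 1) d =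
        elementColor Dom' Vp' (n + 1) d := by
      intro v d hd
      refine Prod.ext rfl (funext fun p => Set.ext fun u => ?_)
      have hp := p.is_lt
      simp only [elementColor, V, mem_ofPred_eq, List.mem_filter, List.mem_flatMap, List.mem_map,
        List.mem_range, Finset.mem_toList, Finset.mem_univ, true_and, decide_eq_true_eq]
      exact and_iff_right ⟨p, hp, u, (v, d), hd, rfl⟩
    have H' : ColorsMatch Dom Dom' Vp (fun p w d => (p, w, d) ∈ V) (n + 1) := by
      intro k hk
      rw [H k hk]
      congr 2
      ext d
      by_cases hd : ∃ v, d ∈ Dom' v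
      · obtain ⟨v, hd⟩ := hd
        simp only [mem_preimage, hcolor v d hd]
      · obtain ⟨v, hv⟩ := hk
        refine iff_of_false ?_ ?_ <;> rintro rfl <;> exact hd ⟨v, hv⟩
    have hQ : ∀ p < n + 1, ∀ w, Vq p w ↔ (p, w) ∈ Q := by
      intro p hp w
      simp [Q, Nat.lt_succ_iff.1 hp]
    obtain ⟨σ', hσ', hsim⟩ := H'.exists_assignment (by omega) fun x _ => hσ x
    obtain ⟨s, hs, hsσ⟩ := exists_mem_allBindings d₀ (l := fiberList A w) (k := n + 1)
      fun x _ => mem_fiberList.2 (hσ' x)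
    refine (H'.sat_iff R hQ φ (by omega) w σ (assignmentOf d₀ s)
      (hsim.congr (fun _ _ => rfl) fun x hx => hsσ x hx)).2 (hall (n, (A, V, Q), w, s) ?_)
    simp only [validityConfigs, List.mem_flatMap, List.mem_map]
    exact ⟨V, filter_mem_allSublists _ _, Q, filter_mem_allSublists _ _, w, by simp, s, hs, rfl⟩

theorem primrec_truncationBound (W : Type) : Primrec (truncationBound W) := by
  have hpow : Primrec₂ ((· ^ ·) : ℕ → ℕ → ℕ) := Primrec₂.unpaired'.1 Nat.Primrec.pow
  exact Primrec.nat_mul.comp Primrec.succ (hpow.comp (Primrec.const _) Primrec.succ)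

theorem primrec_truncatedClassCard [Finite W] [Primcodable (Set W)] (Dom : W → Set D) :
    Primrec₂ (truncatedClassCard Dom) := by
  classical
  have h : Primrec₂ fun (M : ℕ) (τ : Set W) => if {d | {w | d ∈ Dom w} = τ}.encard = ⊤ then M
      else min {d | {w | d ∈ Dom w} = τ}.encard.toNat M :=
    Primrec.ite (PrimrecPred.comp (p := fun τ : Set W => {d | {w | d ∈ Dom w} = τ}.encard = ⊤)
        ⟨inferInstance, Primrec.dom_finite _⟩ Primrec.snd)
      Primrec.fst (Primrec.nat_min.comp
        ((Primrec.dom_finite fun τ : Set W => {d | {w | d ∈ Dom w} = τ}.encard.toNat).comp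
          Primrec.snd) Primrec.fst)
  refine h.of_eq fun M τ => ?_
  rw [truncatedClassCard]
  split_ifs with htop
  · simp [htop]
  · obtain ⟨j, hj⟩ := ENat.ne_top_iff_exists.1 htop
    rw [← hj, ← (Nat.mono_cast (α := ℕ∞)).map_min, ENat.toNat_natCast, ENat.toNat_natCast]

theorem primrec_truncatedInhabitants [Fintype W] [Primcodable W] [Primcodable (Set W)]
    (Dom : W → Set D) : Primrec (truncatedInhabitants Dom) := by
  refine Primrec.list_flatMap (Primrec.const _) (Primrec.list_map (Primrec.list_range.comp
    ((primrec_truncatedClassCard Dom).comp Primrec.fst (Primrec.snd.comp Primrec.snd))) ?_)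
  exact Primrec.pair (Primrec.fst.comp (Primrec.snd.comp Primrec.fst))
    (Primrec.pair (Primrec.snd.comp (Primrec.snd.comp Primrec.fst)) Primrec.snd)

theorem primrec_validityConfigs [Fintype W] [DecidableEq W] [Primcodable W] [Primcodable (Set W)]
    (Dom : W → Set D) : Primrec (validityConfigs Dom) := by
  have hA : Primrec fun n => truncatedInhabitants Dom (truncationBound W n) :=
    (primrec_truncatedInhabitants Dom).comp (primrec_truncationBound W)
  have hrange : Primrec fun n : ℕ => List.range (n + 1) := Primrec.list_range.comp Primrec.succ
  refine Primrec.list_flatMap (primrec_allSublists.comp ?_)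
    (Primrec.list_flatMap (primrec_allSublists.comp ?_)
      (Primrec.list_flatMap (Primrec.const _) (Primrec.list_map ?_ ?_)))
  · refine Primrec.list_flatMap hrange (Primrec.list_flatMap (Primrec.const _)
      (Primrec.list_map (hA.comp (Primrec.fst.comp Primrec.fst)) ?_))
    exact Primrec.pair (Primrec.snd.comp (Primrec.fst.comp Primrec.fst))
      (Primrec.pair (Primrec.snd.comp Primrec.fst) (Primrec.snd.comp Primrec.snd))
  · refine Primrec.list_flatMap (hrange.comp Primrec.fst)
      (Primrec.list_map (Primrec.const _) ?_)
    exact Primrec.pair (Primrec.snd.comp Primrec.fst) Primrec.snd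
  · have hn : Primrec fun a : ((ℕ × List (ℕ × W × Set W × ℕ)) × List (ℕ × W)) × W => a.1.1.1 :=
      Primrec.fst.comp (Primrec.fst.comp Primrec.fst)
    exact primrec_allBindings.comp (primrec_fiberList.comp (hA.comp hn) Primrec.snd)
      (Primrec.succ.comp hn)
  · have hn : Primrec fun a : (((ℕ × List (ℕ × W × Set W × ℕ)) × List (ℕ × W)) × W) ×
        List (ℕ × Set W × ℕ) => a.1.1.1.1 :=
      Primrec.fst.comp (Primrec.fst.comp (Primrec.fst.comp Primrec.fst))
    exact Primrec.pair hn (Primrec.pair (Primrec.pair (hA.comp hn)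
      (Primrec.pair (Primrec.snd.comp (Primrec.fst.comp (Primrec.fst.comp Primrec.fst)))
        (Primrec.snd.comp (Primrec.fst.comp Primrec.fst))))
      (Primrec.pair (Primrec.snd.comp Primrec.fst) Primrec.snd))

end FiniteApproximation

/-- the monadic fragment with equality of the modal logic of a Kripke
frame with a finite set of worlds (arbitrary accessibility relation, possibly
infinite domains) is algorithmically decidable: the set of codes of monadic modal
formulas with equality valid in the frame is a computable predicate. -/
theorem monadic_logic_of_finite_frame_decidable
    (W : Type) [Fintype W] (R : W → W → Prop) (D : Type) (Dom : W → Set D) :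
    ComputablePred (fun n : ℕ => ∃ φ : MMF, encodeMMF φ = n ∧ MMFValid R Dom φ) := by
  classical
  let _ : Primcodable W := Primcodable.ofEquiv _ (Fintype.equivFin W)
  let _ : Primcodable (Set W) := Primcodable.ofEquiv _ (Fintype.equivFin (Set W))
  have hcheck := primrecPred_listModel_sat R
    (succ := fun w => (Finset.univ.filter fun v => R w v).toList) (Primrec.dom_finite _)
    (fun w v => by simp) ((∅, 0) : Set W × ℕ)
  have hall := (PrimrecPred.forall_mem_list hcheck).comp (primrec_validityConfigs Dom)
  obtain ⟨hdec, hprim⟩ := (primrecPred_exists_encodeMMF_eq.and hall).of_eq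
    (q := fun n => ∃ φ, encodeMMF φ = n ∧ MMFValid R Dom φ) (by
      intro n
      have hcode : ∀ c ∈ validityConfigs Dom n, c.1 = n := by
        intro c hc
        simp only [validityConfigs, List.mem_flatMap, List.mem_map] at hc
        obtain ⟨V, -, Q, -, w, -, s, -, rfl⟩ := hc
        rfl
      constructor
      · rintro ⟨⟨φ, rfl⟩, h⟩
        refine ⟨φ, rfl, (mmfValid_iff_forall_mem_validityConfigs R Dom (∅, 0) φ).2 fun c hc => ?_⟩
        obtain ⟨ψ, hψ, hsat⟩ := h c hc
        exact encodeMMF_injective (hψ.trans (hcode c hc)) ▸ hsat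
      · rintro ⟨φ, rfl, h⟩
        exact ⟨⟨φ, rfl⟩, fun c hc => ⟨φ, (hcode c hc).symm,
          (mmfValid_iff_forall_mem_validityConfigs R Dom (∅, 0) φ).1 h c hc⟩⟩)
  exact ⟨hdec, hprim.to_comp⟩
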